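/- Let σ_1,…,σ_n : Ω → H be a (k+1)-nondegenerate holomorphic frame, k ≥ 1, and define the curvature coefficient of the k-jet bundle K(z) := ∂/∂z̄ ( (J_k h)⁻¹ · ∂(J_k h)/∂z )(z), a (k+1)n×(k+1)n matrix. Writing K(z) in (k+1)×(k+1) blocks K_{r,s}(z) of size n×n, 0 ≤ r,s ≤ k, one has: K_{r,s}(z) = 0 whenever 0 ≤ s ≤ k−1 (every block column except the last vanishes), and the bottom-right block is K_{k,k}(z) = (det J_k h(z))⁻¹ · det(J_{k−1}h(z)) · h_k(z)⁻¹ · h_{k+1}(z). -/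

import Mathlib

open Matrix

noncomputable section

/-- Wirtinger derivative `∂g/∂z := (1/2)(∂g/∂x − i·∂g/∂y)`. -/
def Dz {E : Type*} [NormedAddCommGroup E] [NormedSpace ℂ E] (g : ℂ → E) (z : ℂ) : E :=
  (1 / 2 : ℂ) • (fderiv ℝ g z 1 - Complex.I • fderiv ℝ g z Complex.I)

/-- Wirtinger derivative `∂g/∂z̄ := (1/2)(∂g/∂x + i·∂g/∂y)`. -/
def Dzbar {E : Type*} [NormedAddCommGroup E] [NormedSpace ℂ E] (g : ℂ → E) (z : ℂ) : E :=
  (1 / 2 : ℂ) • (fderiv ℝ g z 1 + Complex.I • fderiv ℝ g z Complex.I)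

/-- Entrywise Wirtinger derivative `∂/∂z` of a matrix-valued function. -/
def mDz {ι : Type*} (M : ℂ → Matrix ι ι ℂ) (z : ℂ) : Matrix ι ι ℂ :=
  Matrix.of fun i j => Dz (fun w => M w i j) z

/-- Entrywise Wirtinger derivative `∂/∂z̄` of a matrix-valued function. -/
def mDzbar {ι : Type*} (M : ℂ → Matrix ι ι ℂ) (z : ℂ) : Matrix ι ι ℂ :=
  Matrix.of fun i j => Dzbar (fun w => M w i j) z

variable {H : Type*} [NormedAddCommGroup H] [InnerProductSpace ℂ H] [CompleteSpace H]

/-- `⟪x, y⟫` is the Mathlib inner product (conjugate-linear in the first argument);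
it equals the paper's inner product `⟨y, x⟩`, which is linear in the first argument. -/
local notation "⟪" x ", " y "⟫" => (inner ℂ x y : ℂ)

/-- `jGram σ N z` is the Gram matrix of the family
`(σ_1(z),…,σ_n(z), σ_1′(z),…,σ_n′(z),…,σ_1^{(N−1)}(z),…,σ_n^{(N−1)}(z))`, with `(a,b)` entry
equal to `⟨b-th vector, a-th vector⟩_paper = ⟪a-th vector, b-th vector⟫`.  The jet Gram matrix
`J_k h` of the paper is `jGram σ (k+1)`. -/
def jGram {n : ℕ} (σ : Fin n → ℂ → H) (N : ℕ) (z : ℂ) :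
    Matrix (Fin N × Fin n) (Fin N × Fin n) ℂ :=
  Matrix.of fun p q =>
    ⟪iteratedDeriv (p.1 : ℕ) (σ p.2) z, iteratedDeriv (q.1 : ℕ) (σ q.2) z⟫

/-- `hMat σ m z` is the paper's matrix `h_m(z)`: its `(i,j)` entry is the determinant of the
`(nm+1)×(nm+1)` matrix whose `(a,b)` entry is `⟨u_b, v_a⟩_paper = ⟪v_a, u_b⟫`, where
`u` is the family `(σ_1(z),…,σ_n^{(m−1)}(z))` followed by `σ_j^{(m)}(z)` and `v` is the same
family followed by `σ_i^{(m)}(z)`.  (For `m = 0` this is the Gram matrix `h_0 = J_0 h`.) -/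
def hMat {n : ℕ} (σ : Fin n → ℂ → H) (m : ℕ) (z : ℂ) : Matrix (Fin n) (Fin n) ℂ :=
  Matrix.of fun i j =>
    (Matrix.of fun a b : (Fin m × Fin n) ⊕ Unit =>
      ⟪Sum.elim (fun lp : Fin m × Fin n => iteratedDeriv (lp.1 : ℕ) (σ lp.2) z)
          (fun _ => iteratedDeriv m (σ i) z) a,
        Sum.elim (fun lp : Fin m × Fin n => iteratedDeriv (lp.1 : ℕ) (σ lp.2) z)
          (fun _ => iteratedDeriv m (σ j) z) b⟫).det

section Wirtinger

variable {E : Type*} [NormedAddCommGroup E] [NormedSpace ℂ E]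

theorem Filter.EventuallyEq.Dzbar_eq {f g : ℂ → E} {z : ℂ} (h : f =ᶠ[nhds z] g) :
    Dzbar f z = Dzbar g z := by
  simp only [Dzbar, h.fderiv_eq]

theorem Dzbar_mul {f g : ℂ → ℂ} {z : ℂ} (hf : DifferentiableAt ℝ f z)
    (hg : DifferentiableAt ℝ g z) :
    Dzbar (fun w => f w * g w) z = Dzbar f z * g z + f z * Dzbar g z := by
  simp only [Dzbar, fderiv_fun_mul hf hg, _root_.add_apply,
    _root_.smul_apply, smul_eq_mul]
  ring

theorem Dzbar_sum {ι : Type*} (s : Finset ι) {f : ι → ℂ → E} {z : ℂ}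
    (hf : ∀ i ∈ s, DifferentiableAt ℝ (f i) z) :
    Dzbar (fun w => ∑ i ∈ s, f i w) z = ∑ i ∈ s, Dzbar (f i) z := by
  simp only [Dzbar, fderiv_fun_sum hf, _root_.sum_apply, Finset.smul_sum,
    ← Finset.sum_add_distrib]

theorem fderiv_real_apply_eq_smul_deriv {f : ℂ → E} {z : ℂ} (hf : DifferentiableAt ℂ f z)
    (v : ℂ) : fderiv ℝ f z v = v • deriv f z := by
  rw [hf.fderiv_restrictScalars ℝ]
  simp

variable {F : Type*} [NormedAddCommGroup F] [InnerProductSpace ℂ F]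

/-- The derivative `∂/∂z` falls on the linear slot of an inner product of holomorphic maps. -/
theorem Dz_inner {f g : ℂ → F} {z : ℂ} (hf : DifferentiableAt ℂ f z)
    (hg : DifferentiableAt ℂ g z) : Dz (fun w => ⟪f w, g w⟫) z = ⟪f z, deriv g z⟫ := by
  have hf' := hf.restrictScalars ℝ
  have hg' := hg.restrictScalars ℝ
  simp only [Dz, fderiv_inner_apply ℂ hf' hg', fderiv_real_apply_eq_smul_deriv hf,
    fderiv_real_apply_eq_smul_deriv hg, inner_smul_left, inner_smul_right, smul_eq_mul,
    map_one, Complex.conj_I]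
  linear_combination (1 / 2 : ℂ) * (⟪deriv f z, g z⟫ - ⟪f z, deriv g z⟫) * Complex.I_mul_I

/-- The derivative `∂/∂z̄` falls on the conjugate-linear slot of an inner product of holomorphic
maps. -/
theorem Dzbar_inner {f g : ℂ → F} {z : ℂ} (hf : DifferentiableAt ℂ f z)
    (hg : DifferentiableAt ℂ g z) : Dzbar (fun w => ⟪f w, g w⟫) z = ⟪deriv f z, g z⟫ := by
  have hf' := hf.restrictScalars ℝ
  have hg' := hg.restrictScalars ℝ
  simp only [Dzbar, fderiv_inner_apply ℂ hf' hg', fderiv_real_apply_eq_smul_deriv hf,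
    fderiv_real_apply_eq_smul_deriv hg, inner_smul_left, inner_smul_right, smul_eq_mul,
    map_one, Complex.conj_I]
  linear_combination (1 / 2 : ℂ) * (⟪f z, deriv g z⟫ - ⟪deriv f z, g z⟫) * Complex.I_mul_I

end Wirtinger

section MatrixFunctions

variable {ι : Type*} [Fintype ι]

theorem mDzbar_mul {M N : ℂ → Matrix ι ι ℂ} {z : ℂ}
    (hM : ∀ i j, DifferentiableAt ℝ (fun w => M w i j) z)
    (hN : ∀ i j, DifferentiableAt ℝ (fun w => N w i j) z) :
    mDzbar (fun w => M w * N w) z = mDzbar M z * N z + M z * mDzbar N z := by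
  ext i j
  simp only [mDzbar, Matrix.of_apply, Matrix.add_apply, Matrix.mul_apply]
  rw [Dzbar_sum _ fun l _ => (hM i l).fun_mul (hN l j), ← Finset.sum_add_distrib]
  exact Finset.sum_congr rfl fun l _ => Dzbar_mul (hM i l) (hN l j)

variable [DecidableEq ι] {M : ℂ → Matrix ι ι ℂ} {z : ℂ}

theorem differentiableAt_matrix_det (hM : ∀ i j, DifferentiableAt ℝ (fun w => M w i j) z) :
    DifferentiableAt ℝ (fun w => (M w).det) z := by
  simp only [Matrix.det_apply']
  fun_prop

theorem differentiableAt_matrix_inv (hM : ∀ i j, DifferentiableAt ℝ (fun w => M w i j) z)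
    (hz : (M z).det ≠ 0) (i j : ι) : DifferentiableAt ℝ (fun w => (M w)⁻¹ i j) z := by
  simp only [Matrix.inv_def, Ring.inverse_eq_inv', Matrix.smul_apply, smul_eq_mul,
    Matrix.adjugate_apply]
  refine ((differentiableAt_matrix_det hM).inv hz).mul (differentiableAt_matrix_det fun a b => ?_)
  by_cases h : a = j
  · subst h
    simp
  · simpa [Matrix.updateRow_ne h] using hM a b

/-- The `∂/∂z̄`-derivative of `M⁻¹ N`. -/
theorem mDzbar_inv_mul {N : ℂ → Matrix ι ι ℂ}
    (hM : ∀ i j, DifferentiableAt ℝ (fun w => M w i j) z)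
    (hN : ∀ i j, DifferentiableAt ℝ (fun w => N w i j) z)
    (hdet : ∀ᶠ w in nhds z, (M w).det ≠ 0) :
    mDzbar (fun w => (M w)⁻¹ * N w) z =
      (M z)⁻¹ * (mDzbar N z - mDzbar M z * ((M z)⁻¹ * N z)) := by
  have hX (i j) : DifferentiableAt ℝ (fun w => ((M w)⁻¹ * N w) i j) z := by
    simp only [Matrix.mul_apply]
    exact DifferentiableAt.fun_sum fun l _ =>
      (differentiableAt_matrix_inv hM hdet.self_of_nhds i l).mul (hN l j)
  have hN' : mDzbar N z = mDzbar (fun w => M w * ((M w)⁻¹ * N w)) z := by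
    ext i j
    refine Filter.EventuallyEq.Dzbar_eq ?_
    filter_upwards [hdet] with w hw
    rw [Matrix.mul_nonsing_inv_cancel_left _ _ hw.isUnit]
  rw [hN', mDzbar_mul hM hX, add_sub_cancel_left,
    Matrix.nonsing_inv_mul_cancel_left _ _ hdet.self_of_nhds.isUnit]

end MatrixFunctions

section Schur

variable {α β : Type*} [Fintype α] [Fintype β] [DecidableEq α] [DecidableEq β]

/-- The lower right block of the inverse of a block matrix is inverse to the Schur complement. -/
theorem schur_mul_toBlocks₂₂_inv {A : Matrix α α ℂ} (B : Matrix α β ℂ) (C : Matrix β α ℂ)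
    (D : Matrix β β ℂ) (hA : A.det ≠ 0) (h : (fromBlocks A B C D).det ≠ 0) :
    (D - C * A⁻¹ * B) * (fromBlocks A B C D)⁻¹.toBlocks₂₂ = 1 := by
  have hmul := Matrix.mul_nonsing_inv _ h.isUnit
  set N := (fromBlocks A B C D)⁻¹
  rw [← fromBlocks_toBlocks N, fromBlocks_multiply, ← fromBlocks_one, fromBlocks_inj] at hmul
  obtain ⟨-, h₁₂, -, h₂₂⟩ := hmul
  have hQ : N.toBlocks₁₂ = -(A⁻¹ * (B * N.toBlocks₂₂)) := by
    rw [← Matrix.nonsing_inv_mul_cancel_left A N.toBlocks₁₂ hA.isUnit,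
      eq_neg_of_add_eq_zero_left h₁₂, Matrix.mul_neg]
  rw [← h₂₂, hQ]
  simp only [Matrix.sub_mul, Matrix.mul_neg, Matrix.mul_assoc]
  abel

end Schur

section Jets

variable {F : Type*} [NormedAddCommGroup F] [InnerProductSpace ℂ F] {n : ℕ}

/-- Determinants of bordered jet Gram matrices are, up to the factor `det J_{m-1} h`, the entries
of a Schur complement. -/
theorem hMat_eq_smul_schur (σ : Fin n → ℂ → F) (m : ℕ) (z : ℂ) (hdet : (jGram σ m z).det ≠ 0) :
    hMat σ m z = (jGram σ m z).det •
      ((Matrix.of fun i j => ⟪iteratedDeriv m (σ i) z, iteratedDeriv m (σ j) z⟫) -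
        (Matrix.of fun (i : Fin n) (p : Fin m × Fin n) =>
          ⟪iteratedDeriv m (σ i) z, iteratedDeriv p.1 (σ p.2) z⟫) * (jGram σ m z)⁻¹ *
        (Matrix.of fun (p : Fin m × Fin n) (j : Fin n) =>
          ⟪iteratedDeriv p.1 (σ p.2) z, iteratedDeriv m (σ j) z⟫)) := by
  ext i j
  let _ : Invertible (jGram σ m z) := Matrix.invertibleOfIsUnitDet _ hdet.isUnit
  have hblocks : (Matrix.of fun a b : (Fin m × Fin n) ⊕ Unit =>
      ⟪Sum.elim (fun lp : Fin m × Fin n => iteratedDeriv (lp.1 : ℕ) (σ lp.2) z)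
          (fun _ => iteratedDeriv m (σ i) z) a,
        Sum.elim (fun lp : Fin m × Fin n => iteratedDeriv (lp.1 : ℕ) (σ lp.2) z)
          (fun _ => iteratedDeriv m (σ j) z) b⟫) =
      fromBlocks (jGram σ m z)
        (Matrix.of fun p _ => ⟪iteratedDeriv p.1 (σ p.2) z, iteratedDeriv m (σ j) z⟫)
        (Matrix.of fun _ p => ⟪iteratedDeriv m (σ i) z, iteratedDeriv p.1 (σ p.2) z⟫)
        (Matrix.of fun _ _ => ⟪iteratedDeriv m (σ i) z, iteratedDeriv m (σ j) z⟫) := by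
    ext (a | a) (b | b) <;> rfl
  rw [hMat, Matrix.of_apply, hblocks, Matrix.det_fromBlocks₁₁, Matrix.invOf_eq_nonsing_inv,
    Matrix.det_unique (n := Unit)]
  rfl

/-- Splitting off the top-order derivatives from the index set of a jet. -/
def jetIndexEquiv (m n : ℕ) : (Fin m × Fin n) ⊕ Fin n ≃ Fin (m + 1) × Fin n where
  toFun := Sum.elim (fun p => (p.1.castSucc, p.2)) fun i => (Fin.last m, i)
  invFun p := Fin.lastCases (motive := fun _ => (Fin m × Fin n) ⊕ Fin n) (Sum.inr p.2)
    (fun l => Sum.inl (l, p.2)) p.1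
  left_inv := by rintro (p | i) <;> simp
  right_inv := by
    rintro ⟨l, i⟩
    induction l using Fin.lastCases <;> simp

/-- The lower right `n × n` block of `(J_m h)⁻¹`. -/
theorem jGram_inv_last_last (σ : Fin n → ℂ → F) (m : ℕ) (z : ℂ)
    (hdet : (jGram σ m z).det ≠ 0) (hdet' : (jGram σ (m + 1) z).det ≠ 0) :
    (Matrix.of fun i j : Fin n => (jGram σ (m + 1) z)⁻¹ (Fin.last m, i) (Fin.last m, j)) =
      (jGram σ m z).det • (hMat σ m z)⁻¹ := by
  set B : Matrix (Fin m × Fin n) (Fin n) ℂ := Matrix.of fun p j =>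
    ⟪iteratedDeriv p.1 (σ p.2) z, iteratedDeriv m (σ j) z⟫ with hB
  set C : Matrix (Fin n) (Fin m × Fin n) ℂ := Matrix.of fun i p =>
    ⟪iteratedDeriv m (σ i) z, iteratedDeriv p.1 (σ p.2) z⟫ with hC
  set D : Matrix (Fin n) (Fin n) ℂ := Matrix.of fun i j =>
    ⟪iteratedDeriv m (σ i) z, iteratedDeriv m (σ j) z⟫ with hD
  have hblocks : (jGram σ (m + 1) z).submatrix (jetIndexEquiv m n) (jetIndexEquiv m n) =
      fromBlocks (jGram σ m z) B C D := by
    ext (a | a) (b | b) <;> simp [jGram, jetIndexEquiv, hB, hC, hD]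
  have hblock : (Matrix.of fun i j : Fin n =>
      (jGram σ (m + 1) z)⁻¹ (Fin.last m, i) (Fin.last m, j)) =
      (fromBlocks (jGram σ m z) B C D)⁻¹.toBlocks₂₂ := by
    rw [← hblocks, Matrix.inv_submatrix_equiv]
    rfl
  have hS := schur_mul_toBlocks₂₂_inv B C D hdet
    (by rwa [← hblocks, Matrix.det_submatrix_equiv_self])
  have hM := hMat_eq_smul_schur σ m z hdet
  have hinv : (hMat σ m z)⁻¹ =
      (jGram σ m z).det⁻¹ • (fromBlocks (jGram σ m z) B C D)⁻¹.toBlocks₂₂ := by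
    refine Matrix.inv_eq_right_inv ?_
    rw [hM, Matrix.smul_mul, Matrix.mul_smul, smul_smul, mul_inv_cancel₀ hdet, one_smul, hS]
  rw [hblock, hinv, smul_smul, mul_inv_cancel₀ hdet, one_smul]

theorem det_jGram_ne_zero {σ : Fin n → ℂ → F} {N m : ℕ} {z : ℂ} (hm : m ≤ N)
    (h : LinearIndependent ℂ fun p : Fin N × Fin n => iteratedDeriv (p.1 : ℕ) (σ p.2) z) :
    (jGram σ m z).det ≠ 0 := by
  have hm' : LinearIndependent ℂ fun p : Fin m × Fin n => iteratedDeriv (p.1 : ℕ) (σ p.2) z :=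
    h.comp (fun p : Fin m × Fin n => (Fin.castLE hm p.1, p.2))
      ((Fin.castLE_injective hm).prodMap Function.injective_id)
  exact Matrix.det_gram_ne_zero_iff_linearIndependent.2 hm'

end Jets

theorem differentiableAt_iteratedDeriv_of_differentiableOn {Ω : Set ℂ} (hΩ : IsOpen Ω)
    {f : ℂ → H} (hf : DifferentiableOn ℂ f Ω) (l : ℕ) {z : ℂ} (hz : z ∈ Ω) :
    DifferentiableAt ℂ (iteratedDeriv l f) z := by
  rw [iteratedDeriv_eq_iterate]
  exact ((hf.analyticAt (hΩ.mem_nhds hz)).iterated_deriv l).differentiableAt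

/-- Block structure of the curvature of the `k`-jet bundle: for a `(k+1)`-nondegenerate
holomorphic frame and `K := ∂/∂z̄((J_k h)⁻¹·∂(J_k h)/∂z)`, all block columns of `K` except the
last vanish, and the bottom-right `n×n` block equals
`(det J_k h)⁻¹·det(J_{k−1}h)·h_k⁻¹·h_{k+1}`. -/
theorem stmt14 {n : ℕ} (Ω : Set ℂ) (hΩ : IsOpen Ω) (k : ℕ) (hk : 1 ≤ k)
    (σ : Fin n → ℂ → H) (hσ : ∀ i, DifferentiableOn ℂ (σ i) Ω)
    (hnd : ∀ z ∈ Ω, LinearIndependent ℂ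
      fun p : Fin (k + 2) × Fin n => iteratedDeriv (p.1 : ℕ) (σ p.2) z) :
    ∀ z ∈ Ω,
      (∀ p q : Fin (k + 1) × Fin n, (q.1 : ℕ) ≤ k - 1 →
        mDzbar (fun w => (jGram σ (k + 1) w)⁻¹ * mDz (jGram σ (k + 1)) w) z p q = 0) ∧
      (Matrix.of fun i j : Fin n =>
          mDzbar (fun w => (jGram σ (k + 1) w)⁻¹ * mDz (jGram σ (k + 1)) w) z
            (Fin.last k, i) (Fin.last k, j)) =
        (((jGram σ (k + 1) z).det)⁻¹ * (jGram σ k z).det) •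
          ((hMat σ k z)⁻¹ * hMat σ (k + 1) z) := by
  intro z hz
  have hdiff (l : ℕ) (i : Fin n) {w : ℂ} (hw : w ∈ Ω) :
      DifferentiableAt ℂ (iteratedDeriv l (σ i)) w :=
    differentiableAt_iteratedDeriv_of_differentiableOn hΩ (hσ i) l hw
  have hinner (a b : ℕ) (i j : Fin n) : DifferentiableAt ℝ
      (fun w => ⟪iteratedDeriv a (σ i) w, iteratedDeriv b (σ j) w⟫) z :=
    ((hdiff a i hz).restrictScalars ℝ).inner ℂ ((hdiff b j hz).restrictScalars ℝ)
  have hdet : (jGram σ (k + 1) z).det ≠ 0 := det_jGram_ne_zero (by omega) (hnd z hz)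
  have hdet' : (jGram σ k z).det ≠ 0 := det_jGram_ne_zero (by omega) (hnd z hz)
  set G : Matrix (Fin (k + 1) × Fin n) (Fin (k + 1) × Fin n) ℂ := jGram σ (k + 1) z
  let F : ℂ → Matrix (Fin (k + 1) × Fin n) (Fin (k + 1) × Fin n) ℂ := fun w =>
    Matrix.of fun p q =>
      ⟪iteratedDeriv (p.1 : ℕ) (σ p.2) w, iteratedDeriv ((q.1 : ℕ) + 1) (σ q.2) w⟫
  let L : Matrix (Fin (k + 1) × Fin n) (Fin (k + 1) × Fin n) ℂ :=
    Matrix.of fun p q =>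
      ⟪iteratedDeriv ((p.1 : ℕ) + 1) (σ p.2) z, iteratedDeriv (q.1 : ℕ) (σ q.2) z⟫
  let S : Matrix (Fin (k + 1) × Fin n) (Fin (k + 1) × Fin n) ℂ :=
    Matrix.of fun p q =>
      ⟪iteratedDeriv ((p.1 : ℕ) + 1) (σ p.2) z, iteratedDeriv ((q.1 : ℕ) + 1) (σ q.2) z⟫
  have hDz {w : ℂ} (hw : w ∈ Ω) : mDz (jGram σ (k + 1)) w = F w := by
    ext p q
    have h := Dz_inner (hdiff p.1 p.2 hw) (hdiff q.1 q.2 hw)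
    rwa [← iteratedDeriv_succ] at h
  have hDzbarG : mDzbar (jGram σ (k + 1)) z = L := by
    ext p q
    have h := Dzbar_inner (hdiff p.1 p.2 hz) (hdiff q.1 q.2 hz)
    rwa [← iteratedDeriv_succ] at h
  have hDzbarF : mDzbar F z = S := by
    ext p q
    have h := Dzbar_inner (hdiff p.1 p.2 hz) (hdiff (q.1 + 1) q.2 hz)
    rwa [← iteratedDeriv_succ] at h
  have hK : mDzbar (fun w => (jGram σ (k + 1) w)⁻¹ * mDz (jGram σ (k + 1)) w) z =
      G⁻¹ * (S - L * (G⁻¹ * F z)) := by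
    have hcongr : mDzbar (fun w => (jGram σ (k + 1) w)⁻¹ * mDz (jGram σ (k + 1)) w) z =
        mDzbar (fun w => (jGram σ (k + 1) w)⁻¹ * F w) z := by
      ext p q
      refine Filter.EventuallyEq.Dzbar_eq ?_
      filter_upwards [hΩ.mem_nhds hz] with w hw
      rw [hDz hw]
    rw [hcongr, mDzbar_inv_mul (M := jGram σ (k + 1)) (N := F)
      (fun p q => hinner p.1 q.1 p.2 q.2) (fun p q => hinner p.1 (q.1 + 1) p.2 q.2), hDzbarG, hDzbarF]
    filter_upwards [hΩ.mem_nhds hz] with w hw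
    exact det_jGram_ne_zero (by omega) (hnd w hw)
  have hcol (p q : Fin (k + 1) × Fin n) (hq : (q.1 : ℕ) < k) :
      (S - L * (G⁻¹ * F z)) p q = 0 := by
    let q' : Fin (k + 1) × Fin n := (⟨q.1 + 1, by omega⟩, q.2)
    have h : (L * (G⁻¹ * F z)) p q = (L * (G⁻¹ * G)) p q' := by
      rw [← Matrix.mul_assoc, ← Matrix.mul_assoc]
      rfl
    rw [Matrix.sub_apply, h, Matrix.nonsing_inv_mul _ hdet.isUnit, Matrix.mul_one]
    exact sub_self _
  have hrow (p q : Fin (k + 1) × Fin n) (hp : (p.1 : ℕ) < k) :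
      (S - L * (G⁻¹ * F z)) p q = 0 := by
    let p' : Fin (k + 1) × Fin n := (⟨p.1 + 1, by omega⟩, p.2)
    have h : (L * (G⁻¹ * F z)) p q = (G * (G⁻¹ * F z)) p' q := rfl
    rw [Matrix.sub_apply, h, Matrix.mul_nonsing_inv_cancel_left _ _ hdet.isUnit]
    exact sub_self _
  rw [hK]
  refine ⟨fun p q hq => ?_, ?_⟩
  · rw [Matrix.mul_apply]
    exact Finset.sum_eq_zero fun l _ => by rw [hcol l q (by omega), mul_zero]
  · have hcorner : (Matrix.of fun i j : Fin n =>
        (S - L * (G⁻¹ * F z)) (Fin.last k, i) (Fin.last k, j)) =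
        G.det⁻¹ • hMat σ (k + 1) z := by
      rw [hMat_eq_smul_schur σ (k + 1) z hdet, smul_smul, inv_mul_cancel₀ hdet, one_smul,
        Matrix.mul_assoc]
      rfl
    have hprod : (Matrix.of fun i j : Fin n =>
        (G⁻¹ * (S - L * (G⁻¹ * F z))) (Fin.last k, i) (Fin.last k, j)) =
        (Matrix.of fun i j : Fin n => G⁻¹ (Fin.last k, i) (Fin.last k, j)) *
          Matrix.of fun i j : Fin n =>
            (S - L * (G⁻¹ * F z)) (Fin.last k, i) (Fin.last k, j) := by
      ext i j
      rw [Matrix.of_apply, Matrix.mul_apply, Matrix.mul_apply, Fintype.sum_prod_type,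
        Fin.sum_univ_castSucc, Finset.sum_eq_zero, zero_add]
      · rfl
      · exact fun l _ => Finset.sum_eq_zero fun a _ => by
          rw [hrow (l.castSucc, a) _ (by simp), mul_zero]
    rw [hprod, hcorner, jGram_inv_last_last σ k z hdet' hdet, Matrix.smul_mul, Matrix.mul_smul,
      smul_smul, mul_comm]
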